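/- Let A be a commutative ring, let γ, δ, s, t ∈ A with γ² − 4δ a unit in A, let q(X,Y) = X² + γXY + δY², let R = A[X,Y]/(q(X,Y) − q(s,t)), and let u, v be the images of X, Y in R. Let Q(R) be the total quotient ring of R with canonical map ι : R → Q(R), let ε = ι(u + s + γt)·ι(v − t)⁻¹ ∈ Q(R), and let J = (u − s, v − t) be the ideal of R generated by u − s and v − t, regarded as an R-module. Then every R-module homomorphism h : J → R is given by multiplication by an element of ι(R) + ι(R)·ε; that is, there exist r, a ∈ R such that for every j ∈ J one has ι(h(j)) = (ι(r) + ι(a)·ε)·ι(j). In other words, the dual module Hom_R(J, R) is isomorphic to the fractional ideal generated by 1 and ε. -/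

import Mathlib

set_option synthInstance.maxHeartbeats 1000000
set_option maxHeartbeats 2000000

noncomputable section
open MvPolynomial

/-- `q(X,Y) - q(s,t)` in `A[X,Y]`, where `q(X,Y) = X² + γXY + δY²`. -/
def keyRel (A : Type*) [CommRing A] (γ δ s t : A) : MvPolynomial (Fin 2) A :=
  X 0 ^ 2 + C γ * X 0 * X 1 + C δ * X 1 ^ 2 - C (s ^ 2 + γ * s * t + δ * t ^ 2)

/-- `R = A[X,Y]/(q(X,Y) - q(s,t))`. -/
abbrev KeyRing (A : Type*) [CommRing A] (γ δ s t : A) :=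
  MvPolynomial (Fin 2) A ⧸ Ideal.span {keyRel A γ δ s t}

/-- The quotient map `A[X,Y] → R`. -/
def kmk (A : Type*) [CommRing A] (γ δ s t : A) :
    MvPolynomial (Fin 2) A →+* KeyRing A γ δ s t :=
  Ideal.Quotient.mk (Ideal.span {keyRel A γ δ s t})

/-- The canonical map `ι : R → Q(R)` into the total quotient ring (the localization of
`R` at its non-zero-divisors). -/
def keyι (A : Type*) [CommRing A] (γ δ s t : A) :
    KeyRing A γ δ s t →+* FractionRing (KeyRing A γ δ s t) :=
  algebraMap _ _

/-- `ε = ι(u + s + γt)·ι(v - t)⁻¹ ∈ Q(R)` (`ι(v - t)` is a unit in `Q(R)` since `v - t`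
is a non-zero-divisor of `R`, so `Ring.inverse` computes its genuine inverse). -/
def keyEps (A : Type*) [CommRing A] (γ δ s t : A) : FractionRing (KeyRing A γ δ s t) :=
  keyι A γ δ s t (kmk A γ δ s t (X 0 + C s + C (γ * t)))
    * Ring.inverse (keyι A γ δ s t (kmk A γ δ s t (X 1 - C t)))

/-- `X i - C c` is a non-zero-divisor in a multivariate polynomial ring. -/
theorem eq_zero_of_X_sub_C_mul_eq_zero {A : Type*} [CommRing A] {n : ℕ} {i : Fin n} {c : A}
    {g : MvPolynomial (Fin n) A} (hg : (X i - C c) * g = 0) : g = 0 := by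
  have hm := MonomialOrder.monic_X_sub_C (MonomialOrder.lex (σ := Fin n)) i c
  have hl := MonomialOrder.leadingCoeff_mul_of_left_mem_nonZeroDivisors
    (m := MonomialOrder.lex) (f := X i - C c) (g := g) (by rw [hm]; exact one_mem _)
  rw [hg, MonomialOrder.leadingCoeff_zero, hm, one_mul] at hl
  exact MonomialOrder.leadingCoeff_eq_zero_iff.mp hl.symm

/-- The substitution `Y ↦ t`, as a map `A[X,Y] → A[X]`. -/
def substY {A : Type*} [CommRing A] (t : A) : MvPolynomial (Fin 2) A →ₐ[A] Polynomial A :=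
  aeval ![Polynomial.X, Polynomial.C t]

theorem X_sub_C_dvd_of_substY_eq_zero {A : Type*} [CommRing A] {t : A}
    {k : MvPolynomial (Fin 2) A} (hk : substY t k = 0) : X 1 - C t ∣ k := by
  let π := Ideal.Quotient.mkₐ A (Ideal.span {(X 1 - C t : MvPolynomial (Fin 2) A)})
  have hπ : π = (π.comp (Polynomial.aeval (X 0))).comp (substY t) := by
    ext i
    fin_cases i
    · simp [substY]
    · simp only [substY, AlgHom.comp_apply, aeval_X, π]
      refine Ideal.Quotient.eq.mpr (Ideal.mem_span_singleton.mpr ?_)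
      simp [algebraMap_eq]
  have h0 : π k = 0 := by rw [hπ, AlgHom.comp_apply, hk, map_zero]
  exact Ideal.mem_span_singleton.mp (Ideal.Quotient.eq_zero_iff_mem.mp h0)

theorem X_sub_C_dvd_of_dvd_mul {A : Type*} [CommRing A] {t : A} {f k : MvPolynomial (Fin 2) A}
    (hf : (substY t f).Monic) (hk : X 1 - C t ∣ k * f) : X 1 - C t ∣ k := by
  refine X_sub_C_dvd_of_substY_eq_zero ?_
  obtain ⟨g, hg⟩ := hk
  have h0 := congrArg (substY t) hg
  rw [map_mul, map_mul, show substY t (X 1 - C t) = 0 by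
    simp [substY, Polynomial.algebraMap_eq], zero_mul] at h0
  exact hf.mul_left_eq_zero_iff.mp h0

/-- `Y - t, X - s` is a regular sequence: their only syzygies are the Koszul ones. -/
theorem exists_eq_mul_of_X_sub_C_mul_eq {A : Type*} [CommRing A] {s t : A}
    {a b : MvPolynomial (Fin 2) A} (hab : (X 1 - C t) * a = (X 0 - C s) * b) :
    ∃ r, a = r * (X 0 - C s) ∧ b = r * (X 1 - C t) := by
  have hf : (substY t (X 0 - C s : MvPolynomial (Fin 2) A)).Monic := by
    simpa [substY, Polynomial.algebraMap_eq] using Polynomial.monic_X_sub_C s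
  obtain ⟨r, rfl⟩ := X_sub_C_dvd_of_dvd_mul hf ⟨a, by rw [hab, mul_comm]⟩
  refine ⟨r, sub_eq_zero.mp (eq_zero_of_X_sub_C_mul_eq_zero (i := 1) (c := t) ?_), mul_comm _ _⟩
  linear_combination hab

theorem monic_substY_keyRel {A : Type*} [CommRing A] (γ δ s t : A) :
    (substY t (keyRel A γ δ s t)).Monic := by
  nontriviality A
  have h : substY t (keyRel A γ δ s t) = Polynomial.X ^ 2 +
      (Polynomial.C (γ * t) * Polynomial.X +
        Polynomial.C (δ * t ^ 2 - (s ^ 2 + γ * s * t + δ * t ^ 2))) := by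
    simp [substY, keyRel, Polynomial.algebraMap_eq]
    ring
  rw [h]
  exact Polynomial.monic_X_pow_add (lt_of_le_of_lt Polynomial.degree_linear_le (by norm_num))

theorem keyRel_eq {A : Type*} [CommRing A] (γ δ s t : A) :
    keyRel A γ δ s t = (X 0 - C s) * (X 0 + C s + C (γ * t)) +
      (X 1 - C t) * (C γ * X 0 + C δ * (X 1 + C t)) := by
  simp only [keyRel, map_add, map_mul, map_pow]
  ring

theorem kmk_eq_zero_iff {A : Type*} [CommRing A] {γ δ s t : A} {p : MvPolynomial (Fin 2) A} :
    kmk A γ δ s t p = 0 ↔ keyRel A γ δ s t ∣ p :=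
  Ideal.Quotient.eq_zero_iff_mem.trans Ideal.mem_span_singleton

theorem kmk_X_sub_C_mem_nonZeroDivisors {A : Type*} [CommRing A] (γ δ s t : A) :
    kmk A γ δ s t (X 1 - C t) ∈ nonZeroDivisors (KeyRing A γ δ s t) := by
  rw [mem_nonZeroDivisors_iff_right]
  intro z hz
  obtain ⟨g, rfl⟩ := Ideal.Quotient.mk_surjective z
  change kmk A γ δ s t g * _ = 0 at hz
  change kmk A γ δ s t g = 0
  rw [← map_mul, kmk_eq_zero_iff] at hz
  obtain ⟨k, hk⟩ := hz
  obtain ⟨l, rfl⟩ := X_sub_C_dvd_of_dvd_mul (k := k) (monic_substY_keyRel γ δ s t)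
    ⟨g, by linear_combination -hk⟩
  rw [kmk_eq_zero_iff]
  refine ⟨l, sub_eq_zero.mp (eq_zero_of_X_sub_C_mul_eq_zero (i := 1) (c := t) ?_)⟩
  linear_combination hk

/-- Solutions `(p, m)` in `R` of `(v - t) p = (u - s) m` are generated by `(u - s, v - t)` and
`(-(γu + δ(v + t)), u + s + γt)`. -/
theorem exists_eq_of_kmk_mul_eq {A : Type*} [CommRing A] {γ δ s t : A} {p m : KeyRing A γ δ s t}
    (hpm : kmk A γ δ s t (X 1 - C t) * p = kmk A γ δ s t (X 0 - C s) * m) :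
    ∃ r a : KeyRing A γ δ s t,
      p = r * kmk A γ δ s t (X 0 - C s) -
        a * kmk A γ δ s t (C γ * X 0 + C δ * (X 1 + C t)) ∧
      m = r * kmk A γ δ s t (X 1 - C t) + a * kmk A γ δ s t (X 0 + C s + C (γ * t)) := by
  obtain ⟨p, rfl⟩ := Ideal.Quotient.mk_surjective p
  obtain ⟨m, rfl⟩ := Ideal.Quotient.mk_surjective m
  change _ * kmk A γ δ s t p = _ * kmk A γ δ s t m at hpm
  rw [← map_mul, ← map_mul, ← sub_eq_zero, ← map_sub, kmk_eq_zero_iff] at hpm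
  obtain ⟨k, hk⟩ := hpm
  rw [keyRel_eq] at hk
  obtain ⟨r, hr, hr'⟩ := exists_eq_mul_of_X_sub_C_mul_eq (s := s) (t := t)
    (a := p - k * (C γ * X 0 + C δ * (X 1 + C t))) (b := m + k * (X 0 + C s + C (γ * t)))
    (by linear_combination hk)
  refine ⟨kmk A γ δ s t r, kmk A γ δ s t (-k), ?_, ?_⟩
  · rw [← map_mul, ← map_mul, ← map_sub]
    exact congrArg (kmk A γ δ s t) (by linear_combination hr)
  · rw [← map_mul, ← map_mul, ← map_add]
    exact congrArg (kmk A γ δ s t) (by linear_combination hr')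

theorem keyEps_mul_keyι_snd {A : Type*} [CommRing A] (γ δ s t : A) :
    keyEps A γ δ s t * keyι A γ δ s t (kmk A γ δ s t (X 1 - C t)) =
      keyι A γ δ s t (kmk A γ δ s t (X 0 + C s + C (γ * t))) := by
  have hu : IsUnit (keyι A γ δ s t (kmk A γ δ s t (X 1 - C t))) :=
    IsLocalization.map_units (FractionRing (KeyRing A γ δ s t))
      ⟨_, kmk_X_sub_C_mem_nonZeroDivisors γ δ s t⟩
  rw [keyEps, mul_assoc, Ring.inverse_mul_cancel _ hu, mul_one]

theorem keyEps_mul_keyι_fst {A : Type*} [CommRing A] (γ δ s t : A) :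
    keyEps A γ δ s t * keyι A γ δ s t (kmk A γ δ s t (X 0 - C s)) =
      -keyι A γ δ s t (kmk A γ δ s t (C γ * X 0 + C δ * (X 1 + C t))) := by
  have hu : IsUnit (keyι A γ δ s t (kmk A γ δ s t (X 1 - C t))) :=
    IsLocalization.map_units (FractionRing (KeyRing A γ δ s t))
      ⟨_, kmk_X_sub_C_mem_nonZeroDivisors γ δ s t⟩
  have hrel := congrArg (keyι A γ δ s t)
    (kmk_eq_zero_iff.mpr (keyRel_eq γ δ s t).dvd)
  have hsnd := keyEps_mul_keyι_snd γ δ s t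
  refine hu.mul_left_cancel ?_
  simp only [map_add, map_sub, map_mul, map_zero] at hrel hsnd ⊢
  linear_combination hrel +
    (keyι A γ δ s t (kmk A γ δ s t (X 0)) - keyι A γ δ s t (kmk A γ δ s t (C s))) * hsnd

theorem linearMap_span_pair_apply {R : Type*} [CommRing R] {x y : R}
    (h : (Ideal.span {x, y} : Ideal R) →ₗ[R] R) (α β : R) (hx : x ∈ Ideal.span {x, y})
    (hy : y ∈ Ideal.span {x, y}) (hj : α * x + β * y ∈ Ideal.span {x, y}) :
    h ⟨α * x + β * y, hj⟩ = α * h ⟨x, hx⟩ + β * h ⟨y, hy⟩ := by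
  have h' : (⟨α * x + β * y, hj⟩ : Ideal.span {x, y}) = α • ⟨x, hx⟩ + β • ⟨y, hy⟩ := rfl
  rw [h', map_add, map_smul, map_smul, smul_eq_mul, smul_eq_mul]

theorem mul_linearMap_span_pair_comm {R : Type*} [CommRing R] {x y : R}
    (h : (Ideal.span {x, y} : Ideal R) →ₗ[R] R) (hx : x ∈ Ideal.span {x, y})
    (hy : y ∈ Ideal.span {x, y}) : y * h ⟨x, hx⟩ = x * h ⟨y, hy⟩ := by
  rw [← smul_eq_mul, ← smul_eq_mul, ← map_smul, ← map_smul]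
  exact congrArg h (Subtype.ext (mul_comm y x))

/-- If `γ² - 4δ` is a unit, every `R`-module homomorphism `h : J → R` from the ideal
`J = (u - s, v - t)` is given by multiplication by an element of `ι(R) + ι(R)·ε`:
there are `r, a ∈ R` with `ι(h(j)) = (ι(r) + ι(a)·ε)·ι(j)` for all `j ∈ J`; i.e.
`Hom_R(J, R)` is isomorphic to the fractional ideal generated by `1` and `ε`. -/
theorem stmt14 {A : Type*} [CommRing A] (γ δ s t : A)
    (hdisc : IsUnit (γ ^ 2 - 4 * δ))
    (h : (Ideal.span {kmk A γ δ s t (X 0 - C s), kmk A γ δ s t (X 1 - C t)} :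
        Ideal (KeyRing A γ δ s t)) →ₗ[KeyRing A γ δ s t] KeyRing A γ δ s t) :
    ∃ r a : KeyRing A γ δ s t,
      ∀ j : (Ideal.span {kmk A γ δ s t (X 0 - C s), kmk A γ δ s t (X 1 - C t)} :
          Ideal (KeyRing A γ δ s t)),
        keyι A γ δ s t (h j)
          = (keyι A γ δ s t r + keyι A γ δ s t a * keyEps A γ δ s t)
            * keyι A γ δ s t (j : KeyRing A γ δ s t) := by
  obtain ⟨r, a, hp, hm⟩ := exists_eq_of_kmk_mul_eq
    (mul_linearMap_span_pair_comm h (Ideal.subset_span (by simp)) (Ideal.subset_span (by simp)))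
  refine ⟨r, a, ?_⟩
  rintro ⟨j, hj⟩
  obtain ⟨α, β, rfl⟩ := Ideal.mem_span_pair.mp hj
  rw [linearMap_span_pair_apply h α β (Ideal.subset_span (by simp))
    (Ideal.subset_span (by simp)) hj, hp, hm]
  have h₁ := keyEps_mul_keyι_fst γ δ s t
  have h₂ := keyEps_mul_keyι_snd γ δ s t
  simp only [map_add, map_sub, map_mul] at h₁ h₂ ⊢
  linear_combination -keyι A γ δ s t α * keyι A γ δ s t a * h₁
    - keyι A γ δ s t β * keyι A γ δ s t a * h₂
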